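/- Let K be a semi-symmetric algebraic curvature tensor on a pseudo-Euclidean space (V,⟨·,·⟩), with Ricci operator Ric_K and minimal polynomial χ of Ric_K. Let W and W′ be two distinct subspaces from the family consisting of V₀ := ker(Ric_K²) and the subspaces V_P := ker(P(Ric_K)) for the monic irreducible real factors P of χ different from X. Then K(u,v) = 0 (as an endomorphism of V) whenever u ∈ W and v ∈ W′. -/

import Mathlib

open Polynomial

/-- The linear map `a ↦ K u a v`, whose trace gives the Ricci curvature `ric(u,v)`. -/
def ricMap {V : Type*} [AddCommGroup V] [Module ℝ V]
    (K : V →ₗ[ℝ] V →ₗ[ℝ] Module.End ℝ V) (u v : V) : V →ₗ[ℝ] V where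
  toFun a := K u a v
  map_add' a b := by simp
  map_smul' r a := by simp

/-! The Ricci operator of a semi-symmetric `K` commutes with every `K u v`, because `K u v` acts
as a derivation of `K` and the trace of a commutator vanishes. By pair symmetry this makes `Ric`
self-adjoint for the `End V`-valued form `K` itself, `K (Ric u) v = K u (Ric v)`. Kernels of
coprime polynomials in an operator are orthogonal for any form for which the operator is
self-adjoint, so `K` vanishes between them. -/

section BilinearMap

variable {R M N : Type*} [CommRing R] [AddCommGroup M] [Module R M] [AddCommGroup N] [Module R N]

theorem isSelfAdjoint_pow {B : M →ₗ[R] M →ₗ[R] N} {f : Module.End R M} (hf : B.IsSelfAdjoint f)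
    (n : ℕ) : B.IsSelfAdjoint (f ^ n : Module.End R M) := by
  induction n with
  | zero => exact LinearMap.isAdjointPair_one
  | succ n ih =>
    have h : B.IsAdjointPair B (f ^ n * f : Module.End R M) (f * f ^ n : Module.End R M) :=
      LinearMap.IsAdjointPair.mul ih hf
    rwa [← pow_succ, ← pow_succ'] at h

theorem isSelfAdjoint_aeval {B : M →ₗ[R] M →ₗ[R] N} {f : Module.End R M} (hf : B.IsSelfAdjoint f)
    (p : R[X]) : B.IsSelfAdjoint (aeval f p) := by
  rw [← LinearMap.mem_selfAdjointSubmodule, aeval_eq_sum_range]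
  exact Submodule.sum_mem _ fun n _ => Submodule.smul_mem _ _ (isSelfAdjoint_pow hf n)

theorem apply_eq_zero_of_mem_ker_aeval_of_isCoprime {B : M →ₗ[R] M →ₗ[R] N} {f : Module.End R M}
    (hf : B.IsSelfAdjoint f) {p q : R[X]} (hpq : IsCoprime p q) {u v : M}
    (hu : u ∈ LinearMap.ker (aeval f p)) (hv : v ∈ LinearMap.ker (aeval f q)) : B u v = 0 := by
  obtain ⟨a, b, hab⟩ := hpq
  rw [LinearMap.mem_ker] at hu hv
  have u_eq : aeval f (b * q) u = u := by
    simpa [hu] using congr(aeval f $hab u)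
  calc B u v = B (aeval f (b * q) u) v := by rw [u_eq]
    _ = B u (aeval f (b * q) v) := isSelfAdjoint_aeval hf _ u v
    _ = 0 := by simp [hv]

theorem trace_eq_of_isAdjointPair [Module.Free R M] [Module.Finite R M]
    {B : LinearMap.BilinForm R M} [B.IsPerfPair] {f g : Module.End R M}
    (h : B.IsAdjointPair B f g) : LinearMap.trace R M f = LinearMap.trace R M g := by
  have conj_eq : B.toPerfPair.conj f = Module.Dual.transpose (R := R) g := by
    ext φ y
    obtain ⟨x, rfl⟩ := B.toPerfPair.surjective φ
    rw [LinearEquiv.conj_apply_apply, LinearEquiv.symm_apply_apply]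
    exact h x y
  rw [← LinearMap.trace_conj' f B.toPerfPair, conj_eq, LinearMap.trace_transpose']

end BilinearMap

section Curvature

variable {R V : Type*} [CommRing R] [AddCommGroup V] [Module R V]

/-- The symmetry `⟨K(u,v)w, t⟩ = ⟨K(w,t)u, v⟩` of a curvature tensor under exchange of its two
pairs of arguments. -/
def IsPairSymmetric (B : LinearMap.BilinForm R V) (K : V →ₗ[R] V →ₗ[R] Module.End R V) : Prop :=
  ∀ u v w t, B (K u v w) t = B (K w t u) v

/-- The vanishing of the natural action of `A` on the tensor `K`. Semi-symmetry of `K` is this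
property for every curvature endomorphism `A = K u v`. -/
def IsCurvatureDerivation (K : V →ₗ[R] V →ₗ[R] Module.End R V) (A : Module.End R V) : Prop :=
  ∀ a b, A * K a b - K a b * A = K (A a) b + K a (A b)

/-- `Ric` is the Ricci operator of `K`: `⟨Ric u, v⟩` is the trace of `a ↦ K(u,a)v`, a map which is
written here as `(K u).flip v`. -/
def IsRicciOperator (B : LinearMap.BilinForm R V) (K : V →ₗ[R] V →ₗ[R] Module.End R V)
    (Ric : Module.End R V) : Prop :=
  ∀ u v, B (Ric u) v = LinearMap.trace R V ((K u).flip v)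

variable {B : LinearMap.BilinForm R V} {K : V →ₗ[R] V →ₗ[R] Module.End R V}

theorem IsPairSymmetric.isAdjointPair_flip (hK : IsPairSymmetric B K) (hB : B.IsSymm) (u v : V) :
    B.IsAdjointPair B ((K u).flip v) ((K v).flip u) := fun a b =>
  (hK u a v b).trans (hB.eq _ _)

theorem IsPairSymmetric.isSelfAdjoint_of_commute (hK : IsPairSymmetric B K)
    (hB : Function.Injective B) {f : Module.End R V} (hf : B.IsSelfAdjoint f)
    (hcomm : ∀ u v, Commute f (K u v)) : K.IsSelfAdjoint f := by
  intro u v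
  refine LinearMap.ext fun w => hB (LinearMap.ext fun t => ?_)
  calc B (K (f u) v w) t = B (K w t (f u)) v := hK _ _ _ _
    _ = B (f (K w t u)) v := by
      rw [← Module.End.mul_apply, ← (hcomm w t).eq, Module.End.mul_apply]
    _ = B (K w t u) (f v) := hf _ _
    _ = B (K u (f v) w) t := (hK _ _ _ _).symm

theorem IsCurvatureDerivation.trace_flip_add_trace_flip {A : Module.End R V}
    (hA : IsCurvatureDerivation K A) (x y : V) :
    LinearMap.trace R V ((K (A x)).flip y) + LinearMap.trace R V ((K x).flip (A y)) = 0 := by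
  have commutator_eq :
      (K (A x)).flip y + (K x).flip (A y) = A * (K x).flip y - (K x).flip y * A := by
    ext a
    have h : A (K x a y) - K x a (A y) = K (A x) a y + K x (A a) y := congr($(hA x a) y)
    change K (A x) a y + K x a (A y) = A (K x a y) - K x (A a) y
    rw [eq_sub_iff_add_eq, add_right_comm, ← h, sub_add_cancel]
  rw [← map_add, commutator_eq, map_sub, LinearMap.trace_mul_comm, sub_self]

namespace IsRicciOperator

variable {Ric : Module.End R V}

theorem isSelfAdjoint [Module.Free R V] [Module.Finite R V] [B.IsPerfPair]
    (hRic : IsRicciOperator B K Ric) (hB : B.IsSymm) (hK : IsPairSymmetric B K) :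
    B.IsSelfAdjoint Ric := fun u v =>
  calc B (Ric u) v = LinearMap.trace R V ((K u).flip v) := hRic u v
    _ = LinearMap.trace R V ((K v).flip u) :=
      trace_eq_of_isAdjointPair (hK.isAdjointPair_flip hB u v)
    _ = B (Ric v) u := (hRic v u).symm
    _ = B u (Ric v) := hB.eq _ _

theorem commute (hRic : IsRicciOperator B K Ric) (hB : Function.Injective B)
    {A : Module.End R V} (hder : IsCurvatureDerivation K A) (hskew : B.IsSkewAdjoint A) :
    Commute Ric A := by
  refine LinearMap.ext fun x => hB (LinearMap.ext fun y => ?_)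
  have invariance : B (Ric (A x)) y + B (Ric x) (A y) = 0 := by
    rw [hRic, hRic, hder.trace_flip_add_trace_flip]
  calc B (Ric (A x)) y = -B (Ric x) (A y) := eq_neg_of_add_eq_zero_left invariance
    _ = B (Ric x) ((-A) y) := by rw [LinearMap.neg_apply, map_neg]
    _ = B (A (Ric x)) y := (hskew _ _).symm

end IsRicciOperator

theorem stmt5_general [Module.Free R V] [Module.Finite R V] [B.IsPerfPair] (hB : B.IsSymm)
    (hskew : ∀ u v, B.IsSkewAdjoint (K u v)) (hpair : IsPairSymmetric B K)
    (hder : ∀ u v, IsCurvatureDerivation K (K u v)) {Ric : Module.End R V}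
    (hRic : IsRicciOperator B K Ric) {p q : R[X]} (hpq : IsCoprime p q) :
    ∀ u ∈ LinearMap.ker (aeval Ric p), ∀ v ∈ LinearMap.ker (aeval Ric q), K u v = 0 := by
  have hinj : Function.Injective B := (LinearMap.IsPerfPair.bijective_left B).injective
  have hcomm (u v : V) : Commute Ric (K u v) := hRic.commute hinj (hder u v) (hskew u v)
  have hadj : K.IsSelfAdjoint Ric :=
    hpair.isSelfAdjoint_of_commute hinj (hRic.isSelfAdjoint hB hpair) hcomm
  exact fun u hu v hv => apply_eq_zero_of_mem_ker_aeval_of_isCoprime hadj hpq hu hv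

end Curvature

section PrimaryKernels

variable {𝕜 V : Type*} [Field 𝕜] [AddCommGroup V] [Module 𝕜 V]

/-- The family of subspaces consisting of `V₀ = ker f²` and the `V_P = ker P(f)`, for the monic
irreducible factors `P ≠ X` of the minimal polynomial of `f`. -/
def primaryKernels (f : Module.End 𝕜 V) : Set (Submodule 𝕜 V) :=
  {W | W = LinearMap.ker (f ^ 2) ∨ ∃ P : 𝕜[X], P.Monic ∧ Irreducible P ∧ P ≠ X ∧
    P ∣ minpoly 𝕜 f ∧ W = LinearMap.ker (aeval f P)}

theorem isCoprime_of_monic_of_irreducible_of_ne {P Q : 𝕜[X]} (hP : P.Monic) (hQ : Q.Monic)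
    (hPi : Irreducible P) (hQi : Irreducible Q) (hPQ : P ≠ Q) : IsCoprime P Q :=
  hPi.coprime_iff_not_dvd.mpr fun hdvd =>
    hPQ (eq_of_monic_of_associated hP hQ (hPi.associated_of_dvd hQi hdvd))

theorem exists_isCoprime_of_mem_primaryKernels {f : Module.End 𝕜 V} {W W' : Submodule 𝕜 V}
    (hW : W ∈ primaryKernels f) (hW' : W' ∈ primaryKernels f) (hne : W ≠ W') :
    ∃ p q : 𝕜[X], IsCoprime p q ∧ W = LinearMap.ker (aeval f p) ∧
      W' = LinearMap.ker (aeval f q) := by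
  have sq_eq : f ^ 2 = aeval f (X ^ 2 : 𝕜[X]) := by rw [map_pow, aeval_X]
  have coprime_X {P : 𝕜[X]} (hP : P.Monic) (hPi : Irreducible P) (hPX : P ≠ X) : IsCoprime P X :=
    isCoprime_of_monic_of_irreducible_of_ne hP monic_X hPi irreducible_X hPX
  rcases hW with rfl | ⟨P, hP, hPi, hPX, -, rfl⟩ <;>
    rcases hW' with rfl | ⟨Q, hQ, hQi, hQX, -, rfl⟩
  · exact absurd rfl hne
  · exact ⟨X ^ 2, Q, (coprime_X hQ hQi hQX).symm.pow_left, by rw [sq_eq], rfl⟩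
  · exact ⟨P, X ^ 2, (coprime_X hP hPi hPX).pow_right, rfl, by rw [sq_eq]⟩
  · have hPQ : P ≠ Q := fun h => hne (by rw [h])
    exact ⟨P, Q, isCoprime_of_monic_of_irreducible_of_ne hP hQ hPi hQi hPQ, rfl, rfl⟩

end PrimaryKernels

theorem stmt5 {V : Type*} [AddCommGroup V] [Module ℝ V] [FiniteDimensional ℝ V]
    (B : LinearMap.BilinForm ℝ V) (hB : ∀ u v, B u v = B v u) (hBnd : B.Nondegenerate)
    (K : V →ₗ[ℝ] V →ₗ[ℝ] Module.End ℝ V)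
    (hK1 : ∀ u v, K u v = - K v u)
    (hK2 : ∀ u v w t, B (K u v w) t = - B (K u v t) w)
    (hK3 : ∀ u v w t, B (K u v w) t = B (K w t u) v)
    (hK4 : ∀ u v w, K u v w + K v w u + K w u v = 0)
    (hss : ∀ u v a b, K u v * K a b - K a b * K u v
        = K ((K u v) a) b + K a ((K u v) b))
    (Ric : Module.End ℝ V)
    (hRic : ∀ u v, B (Ric u) v = LinearMap.trace ℝ V (ricMap K u v))
    (W W' : Submodule ℝ V)
    (hW : W = LinearMap.ker (Ric ^ 2) ∨
      ∃ P : Polynomial ℝ, P.Monic ∧ Irreducible P ∧ P ≠ X ∧ P ∣ minpoly ℝ Ric ∧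
        W = LinearMap.ker (Polynomial.aeval Ric P))
    (hW' : W' = LinearMap.ker (Ric ^ 2) ∨
      ∃ P : Polynomial ℝ, P.Monic ∧ Irreducible P ∧ P ≠ X ∧ P ∣ minpoly ℝ Ric ∧
        W' = LinearMap.ker (Polynomial.aeval Ric P))
    (hne : W ≠ W') :
    ∀ u ∈ W, ∀ v ∈ W', K u v = 0 := by
  have : B.IsPerfPair := .of_bijective B (B.toDual hBnd).bijective
  have hskew (u v : V) : B.IsSkewAdjoint (K u v) := fun w t => by simp [hK2 u v w t, hB w]
  obtain ⟨p, q, hpq, rfl, rfl⟩ := exists_isCoprime_of_mem_primaryKernels hW hW' hne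
  exact stmt5_general ⟨hB⟩ hskew hK3 hss hRic hpq
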